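/- Let λ ≥ 1 and let ξ₁ be a real number with |ξ₁| ≥ 100, let ξ be a real number with 0 < |ξ| ≤ 1, and set ξ₂ = ξ − ξ₁ (so ξ₂ ≠ 0). If |3 ξ ξ₁ ξ₂ − (ξ₁² + ξ₁ξ₂ + ξ₂²)/(λ⁴ ξ ξ₁ ξ₂)| < |ξ ξ₁ ξ₂| / 4, then |ξ| ≤ λ⁻² / |ξ₁|. -/

import Mathlib

/-!
Put `P = ξ * ξ₁ * ξ₂` and `Q = ξ₁ ^ 2 + ξ₁ * ξ₂ + ξ₂ ^ 2`. Near resonance the two terms of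
`3 * P - Q / (lam ^ 4 * P)` nearly cancel, so `lam ^ 4 * P ^ 2` is controlled by `Q`. When `ξ` is
small compared with `ξ₁`, the frequencies `ξ₁` and `-ξ₂` are comparable and `Q` is at most a
constant times `ξ₂ ^ 2`. Cancelling `ξ₂ ^ 2` bounds `(lam ^ 2 * ξ * ξ₁) ^ 2`.
-/

section LinearOrderedField

variable {K : Type*} [Field K] [LinearOrder K] [IsStrictOrderedRing K]

theorem sub_mul_sq_lt_of_abs_mul_sub_div_lt {a b c x : K} (h : |a * x - b / x| < c * |x|) :
    (a - c) * x ^ 2 < b := by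
  have hx : x ≠ 0 := by
    rintro rfl
    simp at h
  have h_mul : |a * x ^ 2 - b| < c * x ^ 2 :=
    calc |a * x ^ 2 - b| = |a * x - b / x| * |x| := by
          rw [← abs_mul]
          congr 1
          field_simp
      _ < c * |x| * |x| := mul_lt_mul_of_pos_right h (abs_pos.mpr hx)
      _ = c * x ^ 2 := by rw [mul_assoc, abs_mul_abs_self, sq]
  linarith [(abs_lt.mp h_mul).2]

theorem sq_add_mul_add_sq_le_of_three_mul_abs_add_le {x y : K} (h : 3 * |x + y| ≤ |x|) :
    x ^ 2 + x * y + y ^ 2 ≤ 7 / 4 * y ^ 2 := by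
  have h_factor : 0 ≤ (|x| - 3 * |x + y|) * (3 * |x| - |x + y|) :=
    mul_nonneg (by linarith) (by linarith [abs_nonneg x, abs_nonneg (x + y)])
  have h_cross : (x + y) * x ≤ |x + y| * |x| := (le_abs_self _).trans_eq (abs_mul _ _)
  linarith [sq_abs x, sq_abs (x + y)]

theorem abs_lt_zpow_neg_two_div_abs {r x y : K} (hr : r ≠ 0) (hy : y ≠ 0)
    (h : (r ^ 2 * (x * y)) ^ 2 < 1) : |x| < r ^ (-2 : ℤ) / |y| := by
  have h_abs : |x| * |y| * r ^ 2 < 1 :=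
    calc |x| * |y| * r ^ 2 = |r ^ 2 * (x * y)| := by
          rw [abs_mul, abs_mul, abs_of_nonneg (sq_nonneg r), mul_comm]
      _ < 1 := (sq_lt_one_iff_abs_lt_one _).mp h
  rw [lt_div_iff₀ (abs_pos.mpr hy), zpow_neg, ← one_div, lt_div_iff₀ (by positivity)]
  exact_mod_cast h_abs

end LinearOrderedField

theorem ostrovsky_near_resonance_small_output_general {lam ξ ξ₁ ξ₂ : ℝ}
    (hlam : lam ≠ 0) (hsep : 3 * |ξ| ≤ |ξ₁|) (hξ₂ : ξ₂ = ξ - ξ₁)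
    (hres : |3 * ξ * ξ₁ * ξ₂ - (ξ₁ ^ 2 + ξ₁ * ξ₂ + ξ₂ ^ 2) / (lam ^ 4 * ξ * ξ₁ * ξ₂)|
      < |ξ * ξ₁ * ξ₂| / 4) :
    |ξ| < lam ^ (-2 : ℤ) / |ξ₁| := by
  have hP : ξ * ξ₁ * ξ₂ ≠ 0 := abs_pos.mp (by linarith [(abs_nonneg _).trans_lt hres])
  have hξ₁ : ξ₁ ≠ 0 := right_ne_zero_of_mul (left_ne_zero_of_mul hP)
  have h_upper : ξ₁ ^ 2 + ξ₁ * ξ₂ + ξ₂ ^ 2 ≤ 7 / 4 * ξ₂ ^ 2 :=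
    sq_add_mul_add_sq_le_of_three_mul_abs_add_le (by rwa [hξ₂, add_sub_cancel])
  have h_lower : (3 - 1 / 4) * (ξ * ξ₁ * ξ₂) ^ 2
      < (ξ₁ ^ 2 + ξ₁ * ξ₂ + ξ₂ ^ 2) / lam ^ 4 :=
    sub_mul_sq_lt_of_abs_mul_sub_div_lt
      (by simpa only [div_div, mul_assoc, one_div_mul_eq_div] using hres)
  rw [lt_div_iff₀ (by positivity)] at h_lower
  have h_cancel : (lam ^ 2 * (ξ * ξ₁)) ^ 2 * ξ₂ ^ 2 < 1 * ξ₂ ^ 2 := by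
    linarith [sq_nonneg ξ₂]
  exact abs_lt_zpow_neg_two_div_abs hlam hξ₁ (lt_of_mul_lt_mul_right h_cancel (sq_nonneg ξ₂))

/-- Near-resonant interaction of a large frequency `ξ₁` with a small output frequency `ξ`
forces `|ξ| ≤ λ⁻²/|ξ₁|` for the Ostrovsky equation with positive dispersion. -/
theorem ostrovsky_near_resonance_small_output (lam ξ ξ₁ ξ₂ : ℝ)
    (hlam : 1 ≤ lam) (hξ₁ : 100 ≤ |ξ₁|) (hξpos : 0 < |ξ|) (hξle : |ξ| ≤ 1)
    (hξ₂ : ξ₂ = ξ - ξ₁)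
    (hres : |3 * ξ * ξ₁ * ξ₂ - (ξ₁ ^ 2 + ξ₁ * ξ₂ + ξ₂ ^ 2) / (lam ^ 4 * ξ * ξ₁ * ξ₂)|
      < |ξ * ξ₁ * ξ₂| / 4) :
    |ξ| ≤ lam ^ (-2 : ℤ) / |ξ₁| :=
  (ostrovsky_near_resonance_small_output_general (by positivity) (by linarith) hξ₂ hres).le
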